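/- For every partition λ and all z, z' ∈ ℂ: Σ_{□ addable to λ} (z + c(□))(z' + c(□)) − Σ_{□ removable from λ} (z + c(□))(z' + c(□)) = zz' + 2|λ|, where the first sum is over all squares □ that can be added to λ to give a partition, and the second sum is over all squares □ that can be removed from λ to give a partition. -/

import Mathlib

open scoped Classical

noncomputable section

/-- The content of a cell `c = (i, j)` (0-indexed row `i` and column `j`) of a Young diagram:
`c(□) = column(□) - row(□)`. -/
def cellContent (c : ℕ × ℕ) : ℤ := (c.2 : ℤ) - (c.1 : ℤ)

/-- The hook length of the cell `c = (i, j)` of the Young diagram `Y`: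
`h(□) = λ_i - j + λ'_j - i - 1` in 0-indexed coordinates. -/
def hookLen (Y : YoungDiagram) (c : ℕ × ℕ) : ℕ :=
  (Y.rowLen c.1 - c.2) + (Y.colLen c.2 - c.1) - 1

/-- The product `Π_{□ ∈ λ} (z + c(□)) (z' + c(□)) / h(□)²`. -/
def zWeight (z z' : ℂ) (Y : YoungDiagram) : ℂ :=
  ∏ c ∈ Y.cells, ((z + cellContent c) * (z' + cellContent c) / (hookLen Y c : ℂ) ^ 2)

/-- The finset of squares addable to the Young diagram `Y`: cells `c ∉ Y` such that
adding `c` to `Y` again yields a Young diagram, i.e. every strictly smaller cell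
(in the product order) already belongs to `Y`.  Any such cell has the form
`(i, Y.rowLen i)` for some `i ≤ Y.colLen 0`. -/
def addables (Y : YoungDiagram) : Finset (ℕ × ℕ) :=
  ((Finset.range (Y.colLen 0 + 1)).image fun i => (i, Y.rowLen i)).filter
    fun c => ∀ d : ℕ × ℕ, d ≤ c → d ≠ c → d ∈ Y.cells

/-- Add a square to a Young diagram (when the result is again a Young diagram;
junk value `Y` otherwise). -/
def addBox (Y : YoungDiagram) (c : ℕ × ℕ) : YoungDiagram :=
  if h : c ∉ Y.cells ∧ ∀ d : ℕ × ℕ, d ≤ c → d ≠ c → d ∈ Y.cells then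
    { cells := insert c Y.cells,
      isLowerSet := by
        intro a b hba ha
        simp only [Finset.coe_insert, Set.mem_insert_iff, Finset.mem_coe] at ha ⊢
        rcases ha with rfl | ha
        · by_cases hbc : b = a
          · exact Or.inl hbc
          · exact Or.inr (h.2 b hba hbc)
        · exact Or.inr (Y.isLowerSet hba ha) }
  else Y

/-- The finset of squares removable from the Young diagram `Y`: the corners of `Y`. -/
def removables (Y : YoungDiagram) : Finset (ℕ × ℕ) :=
  Y.cells.filter fun c => (c.1 + 1, c.2) ∉ Y.cells ∧ (c.1, c.2 + 1) ∉ Y.cells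

/-- Remove a square from a Young diagram (when the result is again a Young diagram;
junk value `Y` otherwise). -/
def removeBox (Y : YoungDiagram) (c : ℕ × ℕ) : YoungDiagram :=
  if h : (c.1 + 1, c.2) ∉ Y.cells ∧ (c.1, c.2 + 1) ∉ Y.cells then
    { cells := Y.cells.erase c,
      isLowerSet := by
        intro a b hba ha
        rw [Finset.coe_erase, Set.mem_diff] at ha ⊢
        refine ⟨Y.isLowerSet hba ha.1, ?_⟩
        rintro rfl
        rcases lt_or_eq_of_le hba with hlt | rfl
        · rcases Prod.lt_iff.mp hlt with ⟨h1, h2⟩ | ⟨h1, h2⟩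
          · exact h.1 (Y.isLowerSet (Prod.mk_le_mk.mpr ⟨h1, h2⟩) ha.1)
          · exact h.2 (Y.isLowerSet (Prod.mk_le_mk.mpr ⟨h1, h2⟩) ha.1)
        · exact ha.2 rfl }
  else Y

end

theorem aux_tele (r : ℕ → ℂ) (z z' : ℂ) (m : ℕ) :
    (z + r 0) * (z' + r 0) + ∑ i ∈ Finset.range m,
      ((z + (r (i+1) - (i+1))) * (z' + (r (i+1) - (i+1)))
        - (z + (r i - 1 - i)) * (z' + (r i - 1 - i))) =
    (z + (r m - m)) * (z' + (r m - m)) + m * (z + z') - (m:ℂ)^2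
      + 2 * ∑ i ∈ Finset.range m, r i := by
  induction m with
  | zero => simp
  | succ m ih =>
    rw [Finset.sum_range_succ, Finset.sum_range_succ, ← add_assoc, ih]
    push_cast
    ring

theorem aux_lt_colLen (Y : YoungDiagram) (i : ℕ) : i < Y.colLen 0 ↔ 0 < Y.rowLen i := by
  rw [← YoungDiagram.mem_iff_lt_colLen, YoungDiagram.mem_iff_lt_rowLen]

theorem aux_card (Y : YoungDiagram) :
    Y.card = ∑ i ∈ Finset.range (Y.colLen 0), Y.rowLen i := by
  have h : ∀ c ∈ Y.cells, c.1 ∈ Finset.range (Y.colLen 0) := by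
    rintro ⟨i, j⟩ hc
    rw [YoungDiagram.mem_cells, YoungDiagram.mem_iff_lt_rowLen] at hc
    rw [Finset.mem_range, aux_lt_colLen]
    exact lt_of_le_of_lt (Nat.zero_le j) hc
  have := Finset.card_eq_sum_card_fiberwise h
  rw [YoungDiagram.card, this]
  refine Finset.sum_congr rfl fun i _ => ?_
  rw [YoungDiagram.rowLen_eq_card, YoungDiagram.row]

theorem aux_add_iff (Y : YoungDiagram) (i : ℕ) :
    (∀ d : ℕ × ℕ, d ≤ (i, Y.rowLen i) → d ≠ (i, Y.rowLen i) → d ∈ Y.cells) ↔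
      (i = 0 ∨ Y.rowLen i < Y.rowLen (i - 1)) := by
  constructor
  · intro h
    rcases Nat.eq_zero_or_pos i with h0 | h0
    · exact Or.inl h0
    · right
      have := h (i - 1, Y.rowLen i) (Prod.mk_le_mk.mpr ⟨by omega, le_rfl⟩)
        (by intro h'; have := (Prod.mk.inj h').1; omega)
      rwa [YoungDiagram.mem_cells, YoungDiagram.mem_iff_lt_rowLen] at this
  · rintro h ⟨a, b⟩ hle hne
    rw [Prod.mk_le_mk] at hle
    rw [YoungDiagram.mem_cells, YoungDiagram.mem_iff_lt_rowLen]
    rcases eq_or_lt_of_le hle.1 with rfl | hlt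
    · have : b ≠ Y.rowLen a := by rintro rfl; exact hne rfl
      omega
    · have := Y.rowLen_anti a (i - 1) (by omega)
      omega

theorem aux_addables (Y : YoungDiagram) (f : ℕ × ℕ → ℂ) :
    ∑ c ∈ addables Y, f c = f (0, Y.rowLen 0) + ∑ i ∈ Finset.range (Y.colLen 0),
      if Y.rowLen (i+1) < Y.rowLen i then f (i+1, Y.rowLen (i+1)) else 0 := by
  rw [addables, Finset.sum_filter, Finset.sum_image
    (fun a _ b _ h => (Prod.mk.inj h).1), Finset.sum_range_succ']
  simp only [aux_add_iff]
  simp [add_comm]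

theorem aux_removables (Y : YoungDiagram) (f : ℕ × ℕ → ℂ) :
    ∑ c ∈ removables Y, f c = ∑ i ∈ Finset.range (Y.colLen 0),
      if Y.rowLen (i+1) < Y.rowLen i then f (i, Y.rowLen i - 1) else 0 := by
  have : removables Y = ((Finset.range (Y.colLen 0)).filter
      (fun i => Y.rowLen (i+1) < Y.rowLen i)).image (fun i => (i, Y.rowLen i - 1)) := by
    ext ⟨i, j⟩
    simp only [removables, Finset.mem_filter, Finset.mem_image, YoungDiagram.mem_cells,
      YoungDiagram.mem_iff_lt_rowLen, Finset.mem_range, aux_lt_colLen, Prod.mk.injEq]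
    constructor
    · rintro ⟨h1, h2, h3⟩
      exact ⟨i, ⟨by omega, by omega⟩, rfl, by omega⟩
    · rintro ⟨a, ⟨h1, h2⟩, rfl, rfl⟩
      exact ⟨by omega, by omega, by omega⟩
  rw [this, Finset.sum_image (fun a _ b _ h => (Prod.mk.inj h).1), Finset.sum_filter]

/-- For every partition `λ` and all `z, z' ∈ ℂ`:
`Σ_{□ addable to λ} (z + c(□))(z' + c(□)) − Σ_{□ removable from λ} (z + c(□))(z' + c(□))
  = zz' + 2|λ|`. -/
theorem sum_addable_sub_sum_removable (Y : YoungDiagram) (z z' : ℂ) :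
    (∑ c ∈ addables Y, (z + cellContent c) * (z' + cellContent c)) -
      (∑ c ∈ removables Y, (z + cellContent c) * (z' + cellContent c)) =
      z * z' + 2 * (Y.card : ℂ) := by
  rw [aux_addables, aux_removables, add_sub_assoc, ← Finset.sum_sub_distrib]
  have hn : Y.rowLen (Y.colLen 0) = 0 := by
    have := aux_lt_colLen Y (Y.colLen 0)
    omega
  have key := aux_tele (fun i => (Y.rowLen i : ℂ)) z z' (Y.colLen 0)
  simp only [hn] at key
  have hc : (Y.card : ℂ) = ∑ i ∈ Finset.range (Y.colLen 0), (Y.rowLen i : ℂ) := by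
    rw [aux_card]; push_cast; rfl
  rw [hc]
  trans (z + (Y.rowLen 0 : ℂ)) * (z' + (Y.rowLen 0 : ℂ)) + ∑ i ∈ Finset.range (Y.colLen 0),
      ((z + ((Y.rowLen (i+1) : ℂ) - (i+1))) * (z' + ((Y.rowLen (i+1) : ℂ) - (i+1)))
        - (z + ((Y.rowLen i : ℂ) - 1 - i)) * (z' + ((Y.rowLen i : ℂ) - 1 - i)))
  · refine congrArg₂ (· + ·) ?_ ?_
    · simp [cellContent]
    · refine Finset.sum_congr rfl fun i hi => ?_
      rw [Finset.mem_range, aux_lt_colLen] at hi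
      split_ifs with h
      · simp only [cellContent]
        push_cast [Nat.cast_sub (Nat.succ_le_of_lt hi)]
        ring
      · have h2 : Y.rowLen (i+1) = Y.rowLen i :=
          le_antisymm (Y.rowLen_anti i (i+1) (by omega)) (by omega)
        rw [h2]
        ring
  · rw [key]
    push_cast
    ring
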